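/- Let p be a prime, k a field of characteristic p, and A = k[x_1,…,x_n] graded by deg(x_i) = −1. For any free, finitely generated p-DG A-module M, there exist a free, finitely generated p-DG A-module M̃ and a homotopy equivalence f : M → M̃ of p-DG A-modules such that the differential of M̃⊗_A k is (p−1)-nilpotent, i.e. d^{p−1} = 0 on M̃⊗_A k. -/

import Mathlib

/-! Statement 18 (minimal models): For any free, finitely generated `p`-DG `A`-module `M`
there exist a free, finitely generated `p`-DG `A`-module `M̃` and a homotopy equivalence
`f : M → M̃` such that the differential of `M̃ ⊗_A k` is `(p-1)`-nilpotent, i.e.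
`d^{p-1}(M̃) ⊆ (x_1,…,x_n)·M̃`. -/

/-- The polynomial ring `A = k[x_1,…,x_n]` (graded by `deg x_i = -1` via the gradings below). -/
abbrev PolyA (n : ℕ) (k : Type) [Field k] : Type := MvPolynomial (Fin n) k

/-- A `p`-DG module over `A = k[x_1,…,x_n]` with `deg x_i = -1`: a graded `A`-module together
with an `A`-linear differential of degree `-1` satisfying `d ^ p = 0`. -/
structure PDG (p n : ℕ) (k : Type) [Field k] : Type 1 where
  X : Type
  [acg : AddCommGroup X]
  [modA : Module (PolyA n k) X]
  [modk : Module k X]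
  [tower : IsScalarTower k (PolyA n k) X]
  d : X →ₗ[PolyA n k] X
  gr : ℤ → Submodule k X
  internal : DirectSum.IsInternal gr
  x_deg : ∀ (i : Fin n) (m : ℤ), ∀ x ∈ gr m, (MvPolynomial.X i : PolyA n k) • x ∈ gr (m - 1)
  d_deg : ∀ m : ℤ, ∀ x ∈ gr m, d x ∈ gr (m - 1)
  d_pow : d ^ p = 0

attribute [instance] PDG.acg PDG.modA PDG.modk PDG.tower

namespace PDG
variable {p n : ℕ} {k : Type} [Field k] (M : PDG p n k)

/-- `M` is free as a graded `A`-module: it has a homogeneous `A`-basis. -/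
def IsFree : Prop :=
  ∃ (ι : Type) (deg : ι → ℤ) (b : Module.Basis ι (PolyA n k) M.X), ∀ a, b a ∈ M.gr (deg a)

/-- `M` is free and finitely generated as a graded `A`-module. -/
def IsFreeFG : Prop :=
  ∃ (ι : Type) (_ : Fintype ι) (deg : ι → ℤ) (b : Module.Basis ι (PolyA n k) M.X),
    ∀ a, b a ∈ M.gr (deg a)

/-- The submodule `(x_1,…,x_n)·M`, i.e. the kernel of `M → M ⊗_A k`. -/
noncomputable def IM : Submodule (PolyA n k) M.X :=
  (Ideal.span (Set.range (MvPolynomial.X : Fin n → PolyA n k))) • (⊤ : Submodule (PolyA n k) M.X)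

/-- The differential as a `k`-linear map. -/
noncomputable def dk : M.X →ₗ[k] M.X := M.d.restrictScalars k

/-- `(x_1,…,x_n)·M` as a `k`-subspace. -/
noncomputable def IMk : Submodule k M.X := M.IM.restrictScalars k

/-- The total homology `ₛH(M) = ker d^s / im d^{p-s}` as a `k`-vector space. -/
noncomputable abbrev H (s : ℕ) : Type :=
  ↥(LinearMap.ker (M.dk ^ s)) ⧸
    (LinearMap.range (M.dk ^ (p - s))).comap (LinearMap.ker (M.dk ^ s)).subtype

/-- The total homology `ₛH(M ⊗_A k)` as a `k`-vector space, presented as the subquotient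
`ker(d̄^s) / im(d̄^{p-s})` of `M/IM` pulled back to `M`. -/
noncomputable abbrev HBar (s : ℕ) : Type :=
  ↥(Submodule.comap (M.dk ^ s) M.IMk) ⧸
    (LinearMap.range (M.dk ^ (p - s)) ⊔ M.IMk).comap (Submodule.comap (M.dk ^ s) M.IMk).subtype

/-- `ₛH(M ⊗_A k) ≠ 0`. -/
def HBarNonzero (s : ℕ) : Prop :=
  ∃ x : M.X, (M.dk ^ s) x ∈ M.IMk ∧ x ∉ LinearMap.range (M.dk ^ (p - s)) ⊔ M.IMk

end PDG

/-! If `d^(p-1)` does not vanish modulo `(x_1,…,x_n)`, some entry of its matrix in a homogeneous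
basis has a nonzero constant coefficient; being homogeneous, it is a unit. This yields a basis
element `y` and a rescaled coordinate functional `ρ` with `ρ (d^s y) = 1` for `s = p - 1` and `0`
otherwise. The orbit `y, d y, …, d^(p-1) y` then spans a contractible summand: the projection onto
it is the boundary `∑ d^(p-1-i) ∘ h ∘ d^i` of `h = ρ(·) y`. Its complement is the common kernel of
the functionals `ρ ∘ d^i`, which is again free, as one basis vector can be exchanged for each of
them in turn. The retraction onto it is a homotopy equivalence that lowers the rank by `p`, so
repeating the process ends in a minimal module. -/

section HomotopySum

variable {R X Y Z : Type*} [Ring R] [AddCommGroup X] [AddCommGroup Y] [AddCommGroup Z]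
  [Module R X] [Module R Y] [Module R Z]
  {p : ℕ} {dX : X →ₗ[R] X} {dY : Y →ₗ[R] Y} {dZ : Z →ₗ[R] Z}

/-- The map `∑ d^(p-1-i) ∘ h ∘ d^i` bounded by `h`: two morphisms of `p`-complexes are homotopic
when they differ by such a sum. -/
def homotopySum (p : ℕ) (dX : X →ₗ[R] X) (dY : Y →ₗ[R] Y) (h : X →ₗ[R] Y) : X →ₗ[R] Y :=
  ∑ i ∈ Finset.range p, (dY ^ (p - 1 - i)) ∘ₗ h ∘ₗ (dX ^ i)

theorem homotopySum_apply (h : X →ₗ[R] Y) (x : X) :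
    homotopySum p dX dY h x = ∑ i ∈ Finset.range p, (dY ^ (p - 1 - i)) (h ((dX ^ i) x)) := by
  simp [homotopySum, LinearMap.sum_apply]

theorem homotopySum_zero : homotopySum p dX dY 0 = 0 := by
  simp [homotopySum]

theorem homotopySum_neg (h : X →ₗ[R] Y) :
    homotopySum p dX dY (-h) = -homotopySum p dX dY h := by
  simp [homotopySum, LinearMap.neg_comp, LinearMap.comp_neg]

theorem homotopySum_add (h h' : X →ₗ[R] Y) :
    homotopySum p dX dY (h + h') = homotopySum p dX dY h + homotopySum p dX dY h' := by
  simp [homotopySum, LinearMap.add_comp, LinearMap.comp_add, Finset.sum_add_distrib]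

theorem comp_homotopySum {g : Y →ₗ[R] Z} (hg : g ∘ₗ dY = dZ ∘ₗ g) (h : X →ₗ[R] Y) :
    g ∘ₗ homotopySum p dX dY h = homotopySum p dX dZ (g ∘ₗ h) := by
  have hg_pow (i : ℕ) (y : Y) : g ((dY ^ i) y) = (dZ ^ i) (g y) :=
    (LinearMap.congr_fun (Module.End.commute_pow_left_of_commute hg.symm i) y).symm
  ext x
  simp [homotopySum_apply, hg_pow]

theorem homotopySum_comp {f : X →ₗ[R] Y} (hf : f ∘ₗ dX = dY ∘ₗ f) (h : Y →ₗ[R] Z) :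
    homotopySum p dY dZ h ∘ₗ f = homotopySum p dX dZ (h ∘ₗ f) := by
  have hf_pow (i : ℕ) (x : X) : f ((dX ^ i) x) = (dY ^ i) (f x) :=
    (LinearMap.congr_fun (Module.End.commute_pow_left_of_commute hf.symm i) x).symm
  ext x
  simp [homotopySum_apply, hf_pow]

theorem homotopySum_comp_eq_comp_homotopySum (hX : dX ^ p = 0) (hY : dY ^ p = 0)
    (h : X →ₗ[R] Y) : homotopySum p dX dY h ∘ₗ dX = dY ∘ₗ homotopySum p dX dY h := by
  ext x
  let F (i : ℕ) : Y := (dY ^ (p - i)) (h ((dX ^ i) x))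
  have hF_zero : F 0 = 0 := by simp [F, hY]
  have hF_top : F p = 0 := by simp [F, hX]
  calc homotopySum p dX dY h (dX x) = ∑ i ∈ Finset.range p, F (i + 1) := by
        simp only [homotopySum_apply, F, pow_succ, Module.End.mul_apply, Nat.sub_sub,
          Nat.add_comm 1]
    _ = ∑ i ∈ Finset.range p, F i := by
        simpa [hF_zero, hF_top, Finset.sum_range_succ] using (Finset.sum_range_succ' F p).symm
    _ = dY (homotopySum p dX dY h x) := by
        rw [homotopySum_apply, map_sum]
        refine Finset.sum_congr rfl fun i hi => ?_
        have hi' : p - i = (p - 1 - i) + 1 := by have := Finset.mem_range.1 hi; lia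
        simp only [F, hi', pow_succ', Module.End.mul_apply]

end HomotopySum

section KerOrbit

variable {R X : Type*} [Ring R] [AddCommGroup X] [Module R X] {p s : ℕ}
  {d : X →ₗ[R] X} {ρ : X →ₗ[R] R} {x y : X}

/-- The common kernel of the functionals `ρ, ρ ∘ d, …, ρ ∘ d^(s-1)`. For `s = p` it is the
complement of the summand `R[d]/(d^p)` on which these functionals are coordinates. -/
def kerOrbit (d : X →ₗ[R] X) (ρ : X →ₗ[R] R) (s : ℕ) : Submodule R X :=
  ⨅ i ∈ Finset.range s, LinearMap.ker (ρ ∘ₗ d ^ i)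

theorem mem_kerOrbit : x ∈ kerOrbit d ρ s ↔ ∀ i < s, ρ ((d ^ i) x) = 0 := by
  simp [kerOrbit, Submodule.mem_iInf]

theorem kerOrbit_zero : kerOrbit d ρ 0 = ⊤ := by
  simp [kerOrbit]

theorem kerOrbit_succ : kerOrbit d ρ (s + 1) = kerOrbit d ρ s ⊓ LinearMap.ker (ρ ∘ₗ d ^ s) := by
  simp only [kerOrbit, Finset.range_add_one, Finset.iInf_insert, inf_comm]

theorem homotopySum_smulRight_apply (d : X →ₗ[R] X) (ρ : X →ₗ[R] R) (x y : X) :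
    homotopySum p d d (ρ.smulRight y) x =
      ∑ i ∈ Finset.range p, ρ ((d ^ i) x) • (d ^ (p - 1 - i)) y := by
  simp [homotopySum_apply]

-- The elements `d^(p-1-i) y` and the functionals `ρ ∘ d^i`, for `i < p`, form dual families.
theorem isProj_kerOrbit (hy : ∀ s, ρ ((d ^ s) y) = if s = p - 1 then 1 else 0) :
    LinearMap.IsProj (kerOrbit d ρ p) (LinearMap.id - homotopySum p d d (ρ.smulRight y)) where
  map_mem x := by
    refine mem_kerOrbit.2 fun j hj => ?_
    have hdual : ∀ i ∈ Finset.range p, ρ ((d ^ j) ((d ^ (p - 1 - i)) y)) = if i = j then 1 else 0 :=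
      fun i hi => by
        have := Finset.mem_range.1 hi
        rw [← Module.End.mul_apply, ← pow_add, hy]
        exact if_congr (by lia) rfl rfl
    rw [LinearMap.sub_apply, LinearMap.id_apply, homotopySum_smulRight_apply]
    simp only [map_sub, map_sum, map_smul, smul_eq_mul]
    rw [Finset.sum_congr rfl fun i hi => by rw [hdual i hi]]
    simp [hj]
  map_id x hx := by
    rw [LinearMap.sub_apply, LinearMap.id_apply, homotopySum_smulRight_apply, sub_eq_self]
    refine Finset.sum_eq_zero fun i hi => ?_
    rw [mem_kerOrbit.1 hx i (Finset.mem_range.1 hi), zero_smul]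

end KerOrbit

section Exchange

variable {R X ι : Type*} [CommRing R] [AddCommGroup X] [Module R X]
  {ρ : X →ₗ[R] R} {b : ι → X} {j : ι} {c : R} {v : X}

/-- The map `x ↦ x - ρ(x) v`; if `ρ v = 1`, it is the projection onto `ker ρ` along `v`. -/
def kerProj (ρ : X →ₗ[R] R) (v : X) : X →ₗ[R] X :=
  LinearMap.id - ρ.smulRight v

theorem kerProj_apply (ρ : X →ₗ[R] R) (v x : X) : kerProj ρ v x = x - ρ x • v := rfl

theorem isProj_kerProj (hv : ρ v = 1) : LinearMap.IsProj (LinearMap.ker ρ) (kerProj ρ v) where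
  map_mem x := by simp [kerProj_apply, hv]
  map_id x hx := by simp [kerProj_apply, LinearMap.mem_ker.1 hx]

theorem linearIndependent_kerProj (hb : LinearIndependent R b)
    (hv : v ∈ Submodule.span R {b j}) :
    LinearIndependent R fun i : {i // i ≠ j} => kerProj ρ v (b i) := by
  refine (hb.comp _ Subtype.val_injective).map (f := kerProj ρ v) ?_
  have hdisj := hb.disjoint_span_image (s := {i | i ≠ j}) (t := {j}) (by simp)
  rw [Set.image_singleton] at hdisj
  refine hdisj.mono (by rw [Set.range_comp, Subtype.range_coe_subtype]) fun x hx => ?_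
  rw [LinearMap.mem_ker, kerProj_apply, sub_eq_zero] at hx
  exact hx ▸ Submodule.smul_mem _ _ hv

theorem span_kerProj (hc : ρ (c • b j) = 1) :
    Submodule.span R (Set.range fun i : {i // i ≠ j} => kerProj ρ (c • b j) (b i)) =
      Submodule.span R (Set.range b) ⊓ LinearMap.ker ρ := by
  have hproj := isProj_kerProj hc
  have hj : kerProj ρ (c • b j) (b j) = 0 := by
    rw [map_smul, smul_eq_mul, mul_comm] at hc
    rw [kerProj_apply, smul_smul, hc, one_smul, sub_self]
  apply le_antisymm
  · rw [Submodule.span_le]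
    rintro _ ⟨i, rfl⟩
    refine ⟨?_, hproj.map_mem _⟩
    have hb (i) : b i ∈ Submodule.span R (Set.range b) := Submodule.subset_span ⟨i, rfl⟩
    exact sub_mem (hb i) (Submodule.smul_mem _ _ (Submodule.smul_mem _ _ (hb j)))
  · rintro x ⟨hx, hxρ⟩
    rw [← hproj.map_id x hxρ]
    suffices hle : Submodule.span R (Set.range b) ≤ (Submodule.span R (Set.range
        fun i : {i // i ≠ j} => kerProj ρ (c • b j) (b i))).comap (kerProj ρ (c • b j)) from hle hx
    rw [Submodule.span_le]
    rintro _ ⟨i, rfl⟩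
    rcases eq_or_ne i j with rfl | hij
    · simp [hj]
    · exact Submodule.subset_span ⟨⟨i, hij⟩, rfl⟩

end Exchange

section GradedModule

variable {ι : Type*} [DecidableEq ι]

theorem isInternal_comap_of_leftInverse {k X Y : Type*} [Ring k] [AddCommGroup X] [Module k X]
    [AddCommGroup Y] [Module k Y] {gr : ι → Submodule k X} (hgr : DirectSum.IsInternal gr)
    {incl : Y →ₗ[k] X} {retr : X →ₗ[k] Y} (hinv : ∀ y, retr (incl y) = y)
    (hretr : ∀ m, ∀ x ∈ gr m, incl (retr x) ∈ gr m) :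
    DirectSum.IsInternal fun m => (gr m).comap incl := by
  rw [DirectSum.isInternal_submodule_iff_iSupIndep_and_iSup_eq_top]
  constructor
  · intro m
    rw [Submodule.disjoint_def]
    intro y hy hy'
    have hle : (⨆ z, ⨆ (_ : z ≠ m), (gr z).comap incl) ≤ (⨆ z, ⨆ (_ : z ≠ m), gr z).comap incl :=
      iSup₂_le fun z hz => Submodule.comap_mono (le_iSup₂_of_le z hz le_rfl)
    have : incl y = 0 := Submodule.disjoint_def.1 (hgr.submodule_iSupIndep m) _ hy (hle hy')
    rw [← hinv y, this, map_zero]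
  · refine eq_top_iff.2 fun y _ => ?_
    have hle : iSup gr ≤ (⨆ z, (gr z).comap incl).comap retr :=
      iSup_le fun z x hx => Submodule.mem_iSup_of_mem z (hretr z x hx)
    simpa [hinv] using hle (hgr.submodule_iSup_eq_top ▸ Submodule.mem_top : incl y ∈ iSup gr)

theorem pow_mem_of_degree_neg_one {A X σ : Type*} [Semiring A] [AddCommMonoid X] [Module A X]
    [SetLike σ X] {gr : ℤ → σ} {d : X →ₗ[A] X} (hd : ∀ m, ∀ x ∈ gr m, d x ∈ gr (m - 1)) (s : ℕ)
    {m : ℤ} {x : X} (hx : x ∈ gr m) : (d ^ s) x ∈ gr (m - s) := by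
  induction s with
  | zero => simpa using hx
  | succ s ih =>
    rw [pow_succ', Module.End.mul_apply, Nat.cast_succ, ← sub_sub]
    exact hd _ _ ih

variable {A X σ τ : Type*} [AddCommGroup ι] [Ring A] [SetLike σ A] [AddSubmonoidClass σ A]
  (𝒜 : ι → σ) [GradedRing 𝒜] [AddCommGroup X] [Module A X] [SetLike τ X] [AddSubmonoidClass τ X]
  (ℳ : ι → τ) [DirectSum.Decomposition ℳ] [SetLike.GradedSMul 𝒜 ℳ]

theorem coe_decompose_smul_of_mem {j : ι} {x : X} (hx : x ∈ ℳ j) (c : A) (i : ι) :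
    (DirectSum.decompose ℳ (c • x) i : X) = (DirectSum.decompose 𝒜 c (i - j) : A) • x := by
  induction c using DirectSum.Decomposition.inductionOn 𝒜 with
  | zero => simp
  | @homogeneous z c =>
    have hcx : (c : A) • x ∈ ℳ (z + j) := SetLike.GradedSMul.smul_mem c.2 hx
    rcases eq_or_ne (z + j) i with rfl | hi
    · rw [DirectSum.decompose_of_mem_same _ hcx, add_sub_cancel_right,
        DirectSum.decompose_of_mem_same _ c.2]
    · rw [DirectSum.decompose_of_mem_ne _ hcx hi, DirectSum.decompose_of_mem_ne _ c.2, zero_smul]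
      rwa [ne_eq, eq_sub_iff_add_eq]
  | add c c' hc hc' => simp [add_smul, DirectSum.decompose_add, hc, hc']

theorem repr_mem_of_homogeneous_basis {κ : Type*} [Finite κ] (b : Module.Basis κ A X)
    {deg : κ → ι} (hb : ∀ a, b a ∈ ℳ (deg a)) {m : ι} {x : X} (hx : x ∈ ℳ m) (a : κ) :
    b.repr x a ∈ 𝒜 (m - deg a) := by
  cases nonempty_fintype κ
  have hsum : x = ∑ a, (DirectSum.decompose 𝒜 (b.repr x a) (m - deg a) : A) • b a :=
    calc x = (DirectSum.decompose ℳ (∑ a, b.repr x a • b a) m : X) := by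
            rw [b.sum_repr, DirectSum.decompose_of_mem_same _ hx]
      _ = ∑ a, (DirectSum.decompose 𝒜 (b.repr x a) (m - deg a) : A) • b a := by
            rw [DirectSum.decompose_sum, DirectSum.sum_apply, AddSubmonoidClass.coe_finsetSum]
            simp only [coe_decompose_smul_of_mem 𝒜 ℳ (hb _)]
  have hcoord : b.repr x a = DirectSum.decompose 𝒜 (b.repr x a) (m - deg a) :=
    (congrArg (b.repr · a) hsum).trans (by rw [b.repr_sum_self])
  exact hcoord ▸ SetLike.coe_mem _

end GradedModule

namespace PolyA

open MvPolynomial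

variable {n : ℕ} {k : Type} [Field k]

/-- The grading of `A = k[x_1,…,x_n]` in which every variable has degree `-1`. -/
noncomputable def grading (n : ℕ) (k : Type) [Field k] : ℤ → Submodule k (PolyA n k) :=
  weightedHomogeneousSubmodule k fun _ : Fin n => (-1 : ℤ)

noncomputable instance : GradedAlgebra (grading n k) :=
  weightedGradedAlgebra k _

theorem C_mem_grading_zero (u : k) : C u ∈ grading n k 0 :=
  isWeightedHomogeneous_C _ u

theorem degree_eq_neg_of_mem_grading {z : ℤ} {c : PolyA n k} (hc : c ∈ grading n k z)
    {e : Fin n →₀ ℕ} (he : coeff e c ≠ 0) : (e.degree : ℤ) = -z := by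
  have h : Finsupp.weight (fun _ : Fin n => (-1 : ℤ)) e = z := hc he
  simp [← h, Finsupp.weight_apply, Finsupp.sum, Finsupp.degree_apply]

theorem eq_zero_of_mem_grading_of_pos {z : ℤ} {c : PolyA n k} (hc : c ∈ grading n k z)
    (hz : 0 < z) : c = 0 := by
  ext e
  by_contra he
  have := degree_eq_neg_of_mem_grading hc he
  lia

theorem degree_eq_zero_of_constantCoeff_ne_zero {z : ℤ} {c : PolyA n k}
    (hc : c ∈ grading n k z) (h : constantCoeff c ≠ 0) : z = 0 := by
  simpa using (degree_eq_neg_of_mem_grading hc (e := 0) h).symm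

theorem C_inv_constantCoeff_mul_self {z : ℤ} {c : PolyA n k} (hc : c ∈ grading n k z)
    (h : constantCoeff c ≠ 0) : C (constantCoeff c)⁻¹ * c = 1 := by
  obtain rfl := degree_eq_zero_of_constantCoeff_ne_zero hc h
  have hconst : c = C (constantCoeff c) := by
    ext e
    rw [coeff_C]
    split_ifs with he
    · rw [← he, constantCoeff_eq]
    · by_contra hne
      exact he ((Finsupp.degree_eq_zero_iff e).1
        (by simpa using degree_eq_neg_of_mem_grading hc hne)).symm
  conv_lhs => rw [hconst, constantCoeff_C, ← C_mul, inv_mul_cancel₀ h, C_1]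

theorem mem_idealOfVars_of_constantCoeff_eq_zero {c : PolyA n k} (h : constantCoeff c = 0) :
    c ∈ idealOfVars (Fin n) k := by
  rw [← pow_one (idealOfVars (Fin n) k), mem_pow_idealOfVars_iff']
  intro e he
  rwa [(Finsupp.degree_eq_zero_iff e).1 (Nat.lt_one_iff.1 he)]

theorem exists_constantCoeff_ne_zero {ι X : Type*} [AddCommGroup X]
    [Module (PolyA n k) X] {b : ι → X} {ρ : X →ₗ[PolyA n k] PolyA n k} {v : X}
    (hv : v ∈ Submodule.span (PolyA n k) (Set.range b))
    (hρv : ρ v = 1) :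
    ∃ j, constantCoeff (ρ (b j)) ≠ 0 := by
  by_contra! hall
  have hle : Submodule.span (PolyA n k) (Set.range b) ≤ Submodule.comap ρ
      (RingHom.ker (constantCoeff (R := k) (σ := Fin n)) : Ideal (PolyA n k)) :=
    Submodule.span_le.2 (Set.range_subset_iff.2 hall)
  simpa [hρv] using hle hv

end PolyA

section IsGradedFree

open MvPolynomial

variable {n : ℕ} {k : Type} [Field k] {X : Type*} [AddCommGroup X] [Module (PolyA n k) X]
  [Module k X] {gr : ℤ → Submodule k X} {W : Submodule (PolyA n k) X} {r : ℕ}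

/-- `W` is graded free of rank `r`: it is spanned by `r` independent homogeneous elements of the
ambient graded module. -/
def IsGradedFree (gr : ℤ → Submodule k X) (W : Submodule (PolyA n k) X) (r : ℕ) : Prop :=
  ∃ (ι : Type) (_ : Fintype ι) (deg : ι → ℤ) (b : ι → X), Fintype.card ι = r ∧
    LinearIndependent (PolyA n k) b ∧ Submodule.span (PolyA n k) (Set.range b) = W ∧
      ∀ a, b a ∈ gr (deg a)

theorem isGradedFree_top_iff : IsGradedFree gr (⊤ : Submodule (PolyA n k) X) r ↔
    ∃ (ι : Type) (_ : Fintype ι) (deg : ι → ℤ) (b : Module.Basis ι (PolyA n k) X),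
      Fintype.card ι = r ∧ ∀ a, b a ∈ gr (deg a) := by
  constructor
  · rintro ⟨ι, hι, deg, b, hcard, hli, hspan, hb⟩
    exact ⟨ι, hι, deg, Module.Basis.mk hli hspan.ge, hcard, by simpa using hb⟩
  · rintro ⟨ι, hι, deg, b, hcard, hb⟩
    exact ⟨ι, hι, deg, b, hcard, b.linearIndependent, b.span_eq, hb⟩

-- Some basis vector `b j` has `ρ (b j)` a unit; project the others onto `ker ρ` along it.
theorem IsGradedFree.inf_ker [SetLike.GradedSMul (PolyA.grading n k) gr]
    (hW : IsGradedFree gr W r) {ρ : X →ₗ[PolyA n k] PolyA n k} {t : ℤ}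
    (hρ : ∀ m, ∀ x ∈ gr m, ρ x ∈ PolyA.grading n k (m + t)) {v : X} (hv : v ∈ W)
    (hρv : ρ v = 1) : ∃ r', r' + 1 = r ∧ IsGradedFree gr (W ⊓ LinearMap.ker ρ) r' := by
  classical
  obtain ⟨ι, _, deg, b, rfl, hli, rfl, hb⟩ := hW
  obtain ⟨j, hj⟩ := PolyA.exists_constantCoeff_ne_zero hv hρv
  have ht : deg j + t = 0 := PolyA.degree_eq_zero_of_constantCoeff_ne_zero (hρ _ _ (hb j)) hj
  set c : PolyA n k := C (constantCoeff (ρ (b j)))⁻¹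
  have hc : ρ (c • b j) = 1 := by
    rw [map_smul]
    exact PolyA.C_inv_constantCoeff_mul_self (hρ _ _ (hb j)) hj
  have hdeg (i : ι) : kerProj ρ (c • b j) (b i) ∈ gr (deg i) := by
    refine sub_mem (hb i) ?_
    have hc_mem : c • b j ∈ gr ((0 : ℤ) +ᵥ deg j) :=
      SetLike.GradedSMul.smul_mem (A := PolyA.grading n k) (PolyA.C_mem_grading_zero _) (hb j)
    have hmem : ρ (b i) • c • b j ∈ gr ((deg i + t) +ᵥ ((0 : ℤ) +ᵥ deg j)) :=
      SetLike.GradedSMul.smul_mem (hρ _ _ (hb i)) hc_mem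
    rwa [vadd_eq_add, vadd_eq_add, show deg i + t + (0 + deg j) = deg i by lia] at hmem
  refine ⟨Fintype.card {i // i ≠ j}, ?_, {i // i ≠ j}, inferInstance, fun i => deg i, _, rfl,
    linearIndependent_kerProj hli (Submodule.smul_mem _ c (Submodule.mem_span_singleton_self _)),
    span_kerProj hc, fun i => hdeg i⟩
  have hpos : 0 < Fintype.card ι := Fintype.card_pos_iff.2 ⟨j⟩
  rw [Fintype.card_subtype_compl, Fintype.card_subtype_eq, Nat.sub_add_cancel hpos]

theorem IsGradedFree.exists_kerOrbit [SetLike.GradedSMul (PolyA.grading n k) gr]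
    (hX : IsGradedFree gr (⊤ : Submodule (PolyA n k) X) r) {p : ℕ} {d : X →ₗ[PolyA n k] X}
    (hd : ∀ m, ∀ x ∈ gr m, d x ∈ gr (m - 1)) {ρ : X →ₗ[PolyA n k] PolyA n k} {t : ℤ}
    (hρ : ∀ m, ∀ x ∈ gr m, ρ x ∈ PolyA.grading n k (m + t)) {y : X}
    (hy : ∀ s, ρ ((d ^ s) y) = if s = p - 1 then 1 else 0) {s : ℕ} (hs : s ≤ p) :
    ∃ r', r' + s = r ∧ IsGradedFree gr (kerOrbit d ρ s) r' := by
  induction s with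
  | zero => exact ⟨r, rfl, kerOrbit_zero (d := d) (ρ := ρ) ▸ hX⟩
  | succ s ih =>
    obtain ⟨r', hr', hW⟩ := ih (by lia)
    have hmem : (d ^ (p - 1 - s)) y ∈ kerOrbit d ρ s := by
      refine mem_kerOrbit.2 fun i hi => ?_
      rw [← Module.End.mul_apply, ← pow_add, hy, if_neg (by lia)]
    have hone : (ρ ∘ₗ d ^ s) ((d ^ (p - 1 - s)) y) = 1 := by
      rw [LinearMap.comp_apply, ← Module.End.mul_apply, ← pow_add, hy, if_pos (by lia)]
    have hdeg : ∀ m, ∀ x ∈ gr m, (ρ ∘ₗ d ^ s) x ∈ PolyA.grading n k (m + (t - s)) := by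
      intro m x hx
      rw [show m + (t - s) = m - s + t by ring]
      exact hρ _ _ (pow_mem_of_degree_neg_one hd s hx)
    obtain ⟨r'', hr'', hW'⟩ := hW.inf_ker hdeg hmem hone
    exact ⟨r'', by lia, kerOrbit_succ (d := d) (ρ := ρ) ▸ hW'⟩

end IsGradedFree

namespace PDG

open MvPolynomial

variable {p n : ℕ} {k : Type} [Field k] {M N P : PDG p n k}

noncomputable instance (M : PDG p n k) : DirectSum.Decomposition M.gr :=
  M.internal.chooseDecomposition

theorem monomial_smul_mem_gr (e : Fin n →₀ ℕ) {m : ℤ} {x : M.X} (hx : x ∈ M.gr m) :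
    (monomial e 1 : PolyA n k) • x ∈ M.gr (-e.degree + m) := by
  induction e using Finsupp.induction_linear generalizing m x with
  | zero => simpa using hx
  | add e f he hf =>
    have hmem := he (hf hx)
    rw [smul_smul, monomial_mul, one_mul] at hmem
    convert hmem using 2
    rw [map_add, Nat.cast_add, neg_add, add_assoc]
  | single i s =>
    induction s with
    | zero => simpa using hx
    | succ s ih =>
      have hmem := M.x_deg i _ _ ih
      rw [smul_smul, MvPolynomial.X, monomial_mul, one_mul, ← Finsupp.single_add,
        add_comm 1 s] at hmem
      convert hmem using 2
      simp only [Finsupp.degree_single]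
      push_cast
      ring

instance (M : PDG p n k) : SetLike.GradedSMul (PolyA.grading n k) M.gr where
  smul_mem z m c x hc hx := by
    rw [← support_sum_monomial_coeff c, Finset.sum_smul]
    refine sum_mem fun e he => ?_
    have hz := PolyA.degree_eq_neg_of_mem_grading hc (mem_support_iff.1 he)
    have hmem := (M.gr _).smul_mem (coeff e c) (monomial_smul_mem_gr e hx)
    rwa [← smul_assoc, smul_monomial, smul_eq_mul, mul_one, hz, neg_neg] at hmem

theorem isFreeFG_iff : M.IsFreeFG ↔ ∃ r, IsGradedFree M.gr (⊤ : Submodule (PolyA n k) M.X) r := by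
  simp only [isGradedFree_top_iff]
  constructor
  · rintro ⟨ι, hι, deg, b, hb⟩
    exact ⟨Fintype.card ι, ι, hι, deg, b, rfl, hb⟩
  · rintro ⟨-, ι, hι, deg, b, -, hb⟩
    exact ⟨ι, hι, deg, b, hb⟩

/-- Morphisms of `p`-DG modules: `A`-linear maps of degree `0` commuting with the differentials. -/
structure IsHom (f : M.X →ₗ[PolyA n k] N.X) : Prop where
  map_mem : ∀ m : ℤ, ∀ x ∈ M.gr m, f x ∈ N.gr m
  comm : f ∘ₗ M.d = N.d ∘ₗ f

theorem IsHom.id : IsHom (LinearMap.id : M.X →ₗ[PolyA n k] M.X) :=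
  ⟨fun _ _ hx => hx, rfl⟩

theorem IsHom.comp {f : M.X →ₗ[PolyA n k] N.X} {g : N.X →ₗ[PolyA n k] P.X} (hg : IsHom g)
    (hf : IsHom f) : IsHom (g ∘ₗ f) :=
  ⟨fun m x hx => hg.map_mem m _ (hf.map_mem m x hx), by
    rw [LinearMap.comp_assoc, hf.comm, ← LinearMap.comp_assoc, hg.comm, LinearMap.comp_assoc]⟩

theorem IsHom.sub {f g : M.X →ₗ[PolyA n k] N.X} (hf : IsHom f) (hg : IsHom g) : IsHom (f - g) :=
  ⟨fun m x hx => sub_mem (hf.map_mem m x hx) (hg.map_mem m x hx), by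
    rw [LinearMap.sub_comp, LinearMap.comp_sub, hf.comm, hg.comm]⟩

theorem isHom_homotopySum {h : M.X →ₗ[PolyA n k] N.X}
    (hh : ∀ m : ℤ, ∀ x ∈ M.gr m, h x ∈ N.gr (m + p - 1)) : IsHom (homotopySum p M.d N.d h) where
  map_mem m x hx := by
    rw [homotopySum_apply]
    refine sum_mem fun i hi => ?_
    have hmem := pow_mem_of_degree_neg_one N.d_deg (p - 1 - i)
      (hh _ _ (pow_mem_of_degree_neg_one M.d_deg i hx))
    have := Finset.mem_range.1 hi
    rwa [show m - i + p - 1 - (p - 1 - i : ℕ) = m by lia] at hmem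
  comm := homotopySum_comp_eq_comp_homotopySum M.d_pow N.d_pow h

/-- Homotopy of maps of `p`-DG modules, through an `A`-linear map of degree `p - 1`. -/
def Homotopic (f g : M.X →ₗ[PolyA n k] N.X) : Prop :=
  ∃ h : M.X →ₗ[PolyA n k] N.X, (∀ m : ℤ, ∀ x ∈ M.gr m, h x ∈ N.gr (m + p - 1)) ∧
    f - g = homotopySum p M.d N.d h

theorem Homotopic.refl (f : M.X →ₗ[PolyA n k] N.X) : Homotopic f f :=
  ⟨0, fun _ _ _ => zero_mem _, by rw [sub_self, homotopySum_zero]⟩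

theorem Homotopic.trans {f g l : M.X →ₗ[PolyA n k] N.X} (hfg : Homotopic f g)
    (hgl : Homotopic g l) : Homotopic f l := by
  obtain ⟨h, hh, hsum⟩ := hfg
  obtain ⟨h', hh', hsum'⟩ := hgl
  refine ⟨h + h', fun m x hx => add_mem (hh m x hx) (hh' m x hx), ?_⟩
  rw [homotopySum_add, ← hsum, ← hsum', sub_add_sub_cancel]

theorem Homotopic.comp_left {f f' : M.X →ₗ[PolyA n k] N.X} (hff' : Homotopic f f')
    {g : N.X →ₗ[PolyA n k] P.X} (hg : IsHom g) : Homotopic (g ∘ₗ f) (g ∘ₗ f') := by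
  obtain ⟨h, hh, hsum⟩ := hff'
  refine ⟨g ∘ₗ h, fun m x hx => hg.map_mem _ _ (hh m x hx), ?_⟩
  rw [← LinearMap.comp_sub, hsum, comp_homotopySum hg.comm]

theorem Homotopic.comp_right {g g' : N.X →ₗ[PolyA n k] P.X} (hgg' : Homotopic g g')
    {f : M.X →ₗ[PolyA n k] N.X} (hf : IsHom f) : Homotopic (g ∘ₗ f) (g' ∘ₗ f) := by
  obtain ⟨h, hh, hsum⟩ := hgg'
  refine ⟨h ∘ₗ f, fun m x hx => hh _ _ (hf.map_mem m x hx), ?_⟩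
  rw [← LinearMap.sub_comp, hsum, homotopySum_comp hf.comm]

theorem Homotopic.conj {f : M.X →ₗ[PolyA n k] N.X} {g : N.X →ₗ[PolyA n k] M.X}
    {φ : N.X →ₗ[PolyA n k] N.X} (hφ : Homotopic φ LinearMap.id) (hf : IsHom f) (hg : IsHom g)
    (hgf : Homotopic (g ∘ₗ f) LinearMap.id) : Homotopic (g ∘ₗ φ ∘ₗ f) LinearMap.id :=
  ((hφ.comp_right hf).comp_left hg).trans hgf

/-- Homotopy equivalences: morphisms with a two-sided inverse morphism up to homotopy. -/
def IsHomotopyEquiv (f : M.X →ₗ[PolyA n k] N.X) : Prop :=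
  IsHom f ∧ ∃ g : N.X →ₗ[PolyA n k] M.X, IsHom g ∧
    Homotopic (g ∘ₗ f) LinearMap.id ∧ Homotopic (f ∘ₗ g) LinearMap.id

theorem IsHomotopyEquiv.id : IsHomotopyEquiv (LinearMap.id : M.X →ₗ[PolyA n k] M.X) :=
  ⟨IsHom.id, LinearMap.id, IsHom.id, Homotopic.refl _, Homotopic.refl _⟩

theorem IsHomotopyEquiv.comp {f : M.X →ₗ[PolyA n k] N.X} {f' : N.X →ₗ[PolyA n k] P.X}
    (hf' : IsHomotopyEquiv f') (hf : IsHomotopyEquiv f) : IsHomotopyEquiv (f' ∘ₗ f) := by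
  obtain ⟨hf, g, hg, hgf, hfg⟩ := hf
  obtain ⟨hf', g', hg', hgf', hfg'⟩ := hf'
  exact ⟨hf'.comp hf, g ∘ₗ g', hg.comp hg', hgf'.conj hf hg hgf, hfg.conj hg' hf' hfg'⟩

/-- The image `W` of an idempotent endomorphism `e` of the `p`-DG module `M`, with the induced
grading and differential. -/
noncomputable def retract (M : PDG p n k) {W : Submodule (PolyA n k) M.X}
    {e : M.X →ₗ[PolyA n k] M.X} (he : LinearMap.IsProj W e) (hom : IsHom e) : PDG p n k where
  X := W
  d := M.d.restrict (p := W) (q := W) fun x hx => by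
    rw [← he.map_id x hx, ← LinearMap.comp_apply, ← hom.comm]
    exact he.map_mem _
  gr m := (M.gr m).comap (W.subtype.restrictScalars k)
  internal := isInternal_comap_of_leftInverse M.internal
    (retr := he.codRestrict.restrictScalars k) he.codRestrict_apply_cod hom.map_mem
  x_deg i m x hx := M.x_deg i m x hx
  d_deg m x hx := M.d_deg m x hx
  d_pow := by
    rw [Module.End.pow_restrict]
    ext x
    simp [LinearMap.restrict_apply, M.d_pow]

section Retract

variable {W : Submodule (PolyA n k) M.X} {e : M.X →ₗ[PolyA n k] M.X}

theorem isHomotopyEquiv_codRestrict (he : LinearMap.IsProj W e) (hom : IsHom e)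
    (hid : Homotopic e LinearMap.id) :
    IsHomotopyEquiv (M := M) (N := M.retract he hom) he.codRestrict := by
  have hincl : IsHom (M := M.retract he hom) (N := M) W.subtype := ⟨fun _ _ hx => hx, rfl⟩
  have hretr : IsHom (M := M) (N := M.retract he hom) he.codRestrict :=
    ⟨hom.map_mem, LinearMap.ext fun x => Subtype.ext (LinearMap.congr_fun hom.comm x)⟩
  have hinv : he.codRestrict ∘ₗ W.subtype = LinearMap.id :=
    LinearMap.ext he.codRestrict_apply_cod
  refine ⟨hretr, W.subtype, hincl, hid, ?_⟩
  exact hinv ▸ Homotopic.refl (M := M.retract he hom) (N := M.retract he hom) LinearMap.id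

theorem isGradedFree_retract {r : ℕ} (hW : IsGradedFree M.gr W r)
    (he : LinearMap.IsProj W e) (hom : IsHom e) :
    IsGradedFree (M.retract he hom).gr (⊤ : Submodule (PolyA n k) (M.retract he hom).X) r := by
  obtain ⟨ι, hι, deg, b, hcard, hli, rfl, hb⟩ := hW
  refine isGradedFree_top_iff.2 ⟨ι, hι, deg, Module.Basis.span hli, hcard, fun a => ?_⟩
  change ((Module.Basis.span hli a : _) : M.X) ∈ M.gr (deg a)
  rw [Module.Basis.span_apply]
  exact hb a

end Retract

/-- `M` is minimal if the differential of `M ⊗_A k` is `(p - 1)`-nilpotent. -/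
def IsMinimal (M : PDG p n k) : Prop :=
  ∀ x : M.X, (M.d ^ (p - 1)) x ∈ M.IM

section Basis

variable {ι : Type*} (b : Module.Basis ι (PolyA n k) M.X)

theorem mem_IM_of_constantCoeff_repr_eq_zero {x : M.X}
    (hx : ∀ j, constantCoeff (b.repr x j) = 0) : x ∈ M.IM := by
  rw [← b.linearCombination_repr x, Finsupp.linearCombination_apply]
  exact sum_mem fun j _ => Submodule.smul_mem_smul
    (PolyA.mem_idealOfVars_of_constantCoeff_eq_zero (hx j)) Submodule.mem_top

theorem exists_constantCoeff_repr_ne_zero (hmin : ¬ M.IsMinimal) :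
    ∃ a j, constantCoeff (b.repr ((M.d ^ (p - 1)) (b a)) j) ≠ 0 := by
  by_contra! hzero
  have hle : (⊤ : Submodule (PolyA n k) M.X) ≤ M.IM.comap (M.d ^ (p - 1)) := by
    rw [← b.span_eq, Submodule.span_le]
    rintro _ ⟨a, rfl⟩
    exact mem_IM_of_constantCoeff_repr_eq_zero b (hzero a)
  exact hmin fun x => hle Submodule.mem_top

-- The lower values `ρ (d^s y)`, `s < p - 1`, vanish because they lie in positive degree.
theorem exists_dual_of_not_isMinimal [Finite ι] (hp : 0 < p) {deg : ι → ℤ}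
    (hb : ∀ a, b a ∈ M.gr (deg a)) (hmin : ¬ M.IsMinimal) :
    ∃ z, ∃ y ∈ M.gr z, ∃ ρ : M.X →ₗ[PolyA n k] PolyA n k,
      (∀ m, ∀ x ∈ M.gr m, ρ x ∈ PolyA.grading n k (m + (p - 1 - z))) ∧
        ∀ s, ρ ((M.d ^ s) y) = if s = p - 1 then 1 else 0 := by
  obtain ⟨a, j, hj⟩ := exists_constantCoeff_repr_ne_zero b hmin
  have hrepr {m : ℤ} {x : M.X} (hx : x ∈ M.gr m) : b.repr x j ∈ PolyA.grading n k (m - deg j) :=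
    repr_mem_of_homogeneous_basis _ M.gr b hb hx j
  have hpow (s : ℕ) := hrepr (pow_mem_of_degree_neg_one M.d_deg s (hb a))
  have hdeg := PolyA.degree_eq_zero_of_constantCoeff_ne_zero (hpow (p - 1)) hj
  set c : PolyA n k := C (constantCoeff (b.repr ((M.d ^ (p - 1)) (b a)) j))⁻¹
  refine ⟨deg a, b a, hb a, c • b.coord j, fun m x hx => ?_, fun s => ?_⟩
  · have hmem : c * b.repr x j ∈ PolyA.grading n k (0 + (m - deg j)) :=
      SetLike.mul_mem_graded (PolyA.C_mem_grading_zero _) (hrepr hx)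
    rwa [show 0 + (m - deg j) = m + (p - 1 - deg a) by lia] at hmem
  · change c * b.repr ((M.d ^ s) (b a)) j = _
    split_ifs with hs
    · subst hs
      exact PolyA.C_inv_constantCoeff_mul_self (hpow _) hj
    · rcases lt_or_ge s p with hsp | hsp
      · rw [PolyA.eq_zero_of_mem_grading_of_pos (hpow s) (by lia), mul_zero]
      · rw [pow_eq_zero_of_le hsp M.d_pow, LinearMap.zero_apply, map_zero, Finsupp.zero_apply,
          mul_zero]

end Basis

theorem exists_isHomotopyEquiv_of_not_isMinimal (hp : 0 < p) {r : ℕ}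
    (hM : IsGradedFree M.gr (⊤ : Submodule (PolyA n k) M.X) r) (hmin : ¬ M.IsMinimal) :
    ∃ (N : PDG p n k) (r' : ℕ), r' < r ∧ IsGradedFree N.gr (⊤ : Submodule (PolyA n k) N.X) r' ∧
      ∃ f : M.X →ₗ[PolyA n k] N.X, IsHomotopyEquiv f := by
  obtain ⟨ι, _, deg, b, -, hb⟩ := isGradedFree_top_iff.1 hM
  obtain ⟨z, y, hyz, ρ, hρ, hy⟩ := exists_dual_of_not_isMinimal b hp hb hmin
  have hh (m : ℤ) (x : M.X) (hx : x ∈ M.gr m) : ρ.smulRight y x ∈ M.gr (m + p - 1) := by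
    have hmem : ρ x • y ∈ M.gr ((m + (p - 1 - z)) +ᵥ z) :=
      SetLike.GradedSMul.smul_mem (hρ m x hx) hyz
    rwa [vadd_eq_add, show m + (p - 1 - z) + z = m + p - 1 by ring] at hmem
  have hproj := isProj_kerOrbit hy
  have hom := IsHom.id.sub (isHom_homotopySum hh)
  have hid : Homotopic (LinearMap.id - homotopySum p M.d M.d (ρ.smulRight y)) LinearMap.id :=
    ⟨-ρ.smulRight y, fun m x hx => neg_mem (hh m x hx), by
      rw [homotopySum_neg, sub_sub_cancel_left]⟩
  obtain ⟨r', hr', hW⟩ := hM.exists_kerOrbit M.d_deg hρ hy le_rfl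
  exact ⟨M.retract hproj hom, r', by lia, isGradedFree_retract hW hproj hom, _,
    isHomotopyEquiv_codRestrict hproj hom hid⟩

end PDG

theorem stmt_18_general {p n : ℕ} (hp : 0 < p) {k : Type} [Field k] (M : PDG p n k)
    (hfree : M.IsFreeFG) :
    ∃ N : PDG p n k, N.IsFreeFG ∧
      ∃ f : M.X →ₗ[PolyA n k] N.X, PDG.IsHomotopyEquiv f ∧ N.IsMinimal := by
  obtain ⟨r, hM⟩ := PDG.isFreeFG_iff.1 hfree
  induction r using Nat.strong_induction_on generalizing M with
  | h r ih =>
    by_cases hmin : M.IsMinimal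
    · exact ⟨M, hfree, LinearMap.id, PDG.IsHomotopyEquiv.id, hmin⟩
    · obtain ⟨N, r', hr', hN, f, hf⟩ := PDG.exists_isHomotopyEquiv_of_not_isMinimal hp hM hmin
      obtain ⟨L, hL, g, hg, hLmin⟩ := ih r' hr' N (PDG.isFreeFG_iff.2 ⟨r', hN⟩) hN
      exact ⟨L, hL, g ∘ₗ f, hg.comp hf, hLmin⟩

theorem stmt_18 (p n : ℕ) (hp : p.Prime) (k : Type) [Field k] [CharP k p]
    (M : PDG p n k) (hfree : M.IsFreeFG) :
    ∃ Mt : PDG p n k, Mt.IsFreeFG ∧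
      ∃ f : M.X →ₗ[PolyA n k] Mt.X,
        -- `f` is a morphism of `p`-DG `A`-modules:
        (∀ m : ℤ, ∀ x ∈ M.gr m, f x ∈ Mt.gr m) ∧ f ∘ₗ M.d = Mt.d ∘ₗ f ∧
        -- `f` is a homotopy equivalence:
        (∃ g : Mt.X →ₗ[PolyA n k] M.X,
          (∀ m : ℤ, ∀ y ∈ Mt.gr m, g y ∈ M.gr m) ∧ g ∘ₗ Mt.d = M.d ∘ₗ g ∧
          ∃ (h₁ : M.X →ₗ[PolyA n k] M.X) (h₂ : Mt.X →ₗ[PolyA n k] Mt.X),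
            (∀ m : ℤ, ∀ x ∈ M.gr m, h₁ x ∈ M.gr (m + p - 1)) ∧
            (∀ m : ℤ, ∀ y ∈ Mt.gr m, h₂ y ∈ Mt.gr (m + p - 1)) ∧
            g ∘ₗ f - LinearMap.id =
              ∑ i ∈ Finset.range p, (M.d ^ (p - 1 - i)) ∘ₗ h₁ ∘ₗ (M.d ^ i) ∧
            f ∘ₗ g - LinearMap.id =
              ∑ i ∈ Finset.range p, (Mt.d ^ (p - 1 - i)) ∘ₗ h₂ ∘ₗ (Mt.d ^ i)) ∧
        -- the differential of `M̃ ⊗_A k` is `(p-1)`-nilpotent: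
        (∀ x : Mt.X, (Mt.d ^ (p - 1)) x ∈ Mt.IM) := by
  obtain ⟨N, hN, f, ⟨hf, g, hg, ⟨h₁, hh₁, hgf⟩, h₂, hh₂, hfg⟩, hmin⟩ :=
    stmt_18_general hp.pos M hfree
  exact ⟨N, hN, f, hf.map_mem, hf.comm, ⟨g, hg.map_mem, hg.comm, h₁, h₂, hh₁, hh₂, hgf, hfg⟩, hmin⟩
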